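/- Let m be a positive integer and let g : F_{2^m} → F_2 be balanced with g(0) = 0. Define f : F_{2^m} × F_{2^m} → F_2 by f(x, y) = g(y·x^{-1}) (by the convention 0^{-1} = 0, one has f(0, y) = g(0) = 0). Then f is bent. -/

import Mathlib

instance : Fact (Nat.Prime 2) := ⟨Nat.prime_two⟩

noncomputable instance (m : ℕ) : Fintype (GaloisField 2 m) := Fintype.ofFinite _

/-- The absolute trace `tr(x) = Σ_{i=0}^{m-1} x^(2^i)`, as an element of the field. -/
noncomputable def trF {m : ℕ} (x : GaloisField 2 m) : GaloisField 2 m :=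
  ∑ i ∈ Finset.range m, x ^ (2 ^ i)

/-- The absolute trace regarded as taking values in `F₂ = ZMod 2`
(its value in the field is always `0` or `1`). -/
noncomputable def tr2 {m : ℕ} (x : GaloisField 2 m) : ZMod 2 :=
  open scoped Classical in
  if trF x = 1 then 1 else 0

/-!
For fixed `x ≠ 0` the substitution `y = x z` turns the inner sum of the Walsh transform into
`∑ z, (-1) ^ g z * χ (x * (u + v * z))`, where `χ = (-1) ^ tr`. Because `g` is balanced, this also
holds for `x = 0` when `v ≠ 0`, both sides being zero. Summing over `x` first, orthogonality of `χ`
leaves only `z = -u / v`. When `v = 0`, only the column `x = 0` contributes. In both cases, with the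
convention `u / 0 = 0`, the Walsh transform at `(u, v)` is `2 ^ m * (-1) ^ g (-u / v)`: the dual of
`f` is again of the same shape.
-/

open Finset

section CharacterSums

variable {F R : Type*} [Field F] [Fintype F] [CommRing R]

theorem sum_apply_div_mul_addChar_of_ne_zero (ψ : AddChar F R) (G : F → R) {x : F} (hx : x ≠ 0)
    (u v : F) :
    ∑ y, G (y / x) * ψ (u * x + v * y) = ∑ z, G z * ψ (x * (u + v * z)) := by
  refine Fintype.sum_equiv (Equiv.divRight₀ x hx) _ _ fun y ↦ ?_
  have harg : u * x + v * y = x * (u + v * (y / x)) := by field_simp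
  rw [harg, Equiv.divRight₀_apply]

theorem sum_sum_apply_div_mul_addChar_fst (ψ : AddChar F R) {G : F → R}
    (hG : ∑ z, G z = 0) (u : F) :
    ∑ x, ∑ y, G (y / x) * ψ (u * x) = Fintype.card F * G 0 := by
  have hcolumn {x : F} (hx : x ≠ 0) : ∑ y, G (y / x) * ψ (u * x) = 0 := by
    simpa [← sum_mul, hG] using sum_apply_div_mul_addChar_of_ne_zero ψ G hx u 0
  rw [Fintype.sum_eq_single 0 fun x hx ↦ hcolumn hx]
  simp

variable [IsDomain R] {ψ : AddChar F R} {G : F → R}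

theorem sum_apply_div_mul_addChar (hψ : ψ.IsPrimitive) (hG : ∑ z, G z = 0) {v : F} (hv : v ≠ 0)
    (u x : F) :
    ∑ y, G (y / x) * ψ (u * x + v * y) = ∑ z, G z * ψ (x * (u + v * z)) := by
  rcases eq_or_ne x 0 with rfl | hx
  · have horth : ∑ y, ψ (v * y) = 0 := AddChar.sum_eq_zero_of_ne_one (hψ hv)
    simp [← mul_sum, horth, hG]
  · exact sum_apply_div_mul_addChar_of_ne_zero ψ G hx u v

theorem sum_sum_mul_addChar_mul_add (hψ : ψ.IsPrimitive) (u : F) {v : F} (hv : v ≠ 0) :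
    ∑ x, ∑ z, G z * ψ (x * (u + v * z)) = Fintype.card F * G (-u / v) := by
  classical
  have hroot (z : F) : u + v * z = 0 ↔ z = -u / v := by
    rw [eq_div_iff hv, eq_neg_iff_add_eq_zero, add_comm, mul_comm]
  rw [sum_comm]
  simp [← mul_sum, AddChar.sum_mulShift _ hψ, hroot, mul_comm]

theorem sum_prod_apply_div_mul_addChar (hψ : ψ.IsPrimitive) (hG : ∑ z, G z = 0) (u v : F) :
    ∑ p : F × F, G (p.2 / p.1) * ψ (u * p.1 + v * p.2) = Fintype.card F * G (-u / v) := by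
  rw [Fintype.sum_prod_type]
  rcases eq_or_ne v 0 with rfl | hv
  · simpa using sum_sum_apply_div_mul_addChar_fst ψ hG u
  · simp only [sum_apply_div_mul_addChar hψ hG hv, sum_sum_mul_addChar_mul_add hψ u hv]

end CharacterSums

section Trace

theorem isPrimitive_compAddMonoidHom_trace {k K M : Type*} [Field k] [Field K] [Algebra k K]
    [FiniteDimensional k K] [Algebra.IsSeparable k K] [CommMonoid M] {e : AddChar k M}
    (he : e ≠ 1) :
    (e.compAddMonoidHom (Algebra.trace k K).toAddMonoidHom).IsPrimitive := by
  obtain ⟨a, ha⟩ := AddChar.ne_one_iff.1 he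
  obtain ⟨x, rfl⟩ := Algebra.trace_surjective k K a
  exact AddChar.IsPrimitive.of_ne_one (AddChar.ne_one_iff.2 ⟨x, ha⟩)

theorem trF_eq_algebraMap_trace {m : ℕ} (hm : m ≠ 0) (x : GaloisField 2 m) :
    trF x = algebraMap (ZMod 2) (GaloisField 2 m) (Algebra.trace (ZMod 2) (GaloisField 2 m) x) := by
  rw [FiniteField.algebraMap_trace_eq_sum_pow, GaloisField.finrank 2 hm, Nat.card_zmod, trF]

theorem tr2_eq_trace {m : ℕ} (hm : m ≠ 0) (x : GaloisField 2 m) :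
    tr2 x = Algebra.trace (ZMod 2) (GaloisField 2 m) x := by
  have ite_eq_self : ∀ t : ZMod 2, (if t = 1 then 1 else 0) = t := by decide
  simp [tr2, trF_eq_algebraMap_trace hm, ite_eq_self]

end Trace

section Sign

/-- The nontrivial additive character `a ↦ (-1) ^ a` of `ZMod 2`, through which the summands of a
Walsh transform are read as values of a homomorphism. -/
def signChar : AddChar (ZMod 2) ℤ :=
  AddChar.zmodChar 2 neg_one_sq

theorem signChar_apply (a : ZMod 2) : signChar a = (-1) ^ a.val :=
  rfl

theorem signChar_ne_one : signChar ≠ 1 :=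
  AddChar.ne_one_iff.2 ⟨1, by decide⟩

theorem abs_signChar (a : ZMod 2) : |signChar a| = 1 := by
  rw [signChar_apply, abs_neg_one_pow]

theorem sum_signChar_comp {α : Type*} [Fintype α] (g : α → ZMod 2) :
    ∑ x, signChar (g x) = Nat.card α - 2 * Nat.card {x // g x = 1} := by
  have hsign : ∀ a : ZMod 2, signChar a = 1 - 2 * if a = 1 then 1 else 0 := by decide
  simp only [hsign, sum_sub_distrib, ← mul_sum, sum_boole, Nat.card_eq_fintype_card,
    Fintype.card_subtype, sum_const, card_univ, nsmul_one]

theorem sum_signChar_comp_eq_zero_iff {α : Type*} [Fintype α] (g : α → ZMod 2) :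
    ∑ x, signChar (g x) = 0 ↔ 2 * Nat.card {x // g x = 1} = Nat.card α := by
  rw [sum_signChar_comp]
  lia

end Sign

theorem stmt12_general {k K R : Type*} [Field k] [Field K] [Fintype K] [Algebra k K] [CommRing R]
    [IsDomain R] {e : AddChar k R} (he : e ≠ 1) {g : K → k} (hg : ∑ z, e (g z) = 0)
    (f : K × K → k) (hf : ∀ x y, f (x, y) = g (y * x⁻¹)) (u v : K) :
    ∑ p : K × K, e (f p + Algebra.trace k K (u * p.1 + v * p.2)) =
      Nat.card K * e (g (-u / v)) := by
  have : Finite k := .of_injective _ (algebraMap k K).injective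
  rw [Nat.card_eq_fintype_card,
    ← sum_prod_apply_div_mul_addChar (isPrimitive_compAddMonoidHom_trace (K := K) he) hg u v]
  refine sum_congr rfl fun p _ ↦ ?_
  rw [AddChar.map_add_eq_mul, hf, ← div_eq_mul_inv]
  rfl

theorem stmt12 (m : ℕ) (hmpos : 0 < m)
    (g : GaloisField 2 m → ZMod 2)
    (hbal : Nat.card {x : GaloisField 2 m // g x = 1} = 2 ^ (m - 1))
    (hg0 : g 0 = 0)
    (f : GaloisField 2 m × GaloisField 2 m → ZMod 2)
    (hf : ∀ x y, f (x, y) = g (y * x⁻¹)) :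
    ∀ u v : GaloisField 2 m,
      |∑ p : GaloisField 2 m × GaloisField 2 m,
          ((-1 : ℤ) ^ (f p + tr2 (u * p.1 + v * p.2)).val)| = 2 ^ m := by
  have hcard : Nat.card (GaloisField 2 m) = 2 ^ m := GaloisField.card 2 m hmpos.ne'
  have hg := (sum_signChar_comp_eq_zero_iff g).2 (by rw [hbal, hcard, mul_pow_sub_one hmpos.ne'])
  intro u v
  simp_rw [← signChar_apply, tr2_eq_trace hmpos.ne', stmt12_general signChar_ne_one hg f hf u v,
    hcard, abs_mul, abs_signChar]
  simp
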